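/- Let τ be a tree on vertex set {1, ..., n}. Define a 'valid span' of τ to be a pair (u, v) with 1 ≤ u ≤ v ≤ n such that either u = v, or there is a path in τ from u to v all of whose vertices lie in the interval [u, v] and, listing the path's vertices in order, no edge of the path is nested inside another (equivalently, the path visits vertices whose intervals between consecutive vertices cover [u,v] without one arc covering another). Then the map sending a pair (τ, s) of a tree τ on {1,...,n} together with a valid span s of τ, to the tree τ' on {1, ..., n+1} obtained by deleting the edges of the associated path and connecting each vertex of that path to the new vertex n+1, is a bijection from the set of all pairs (tree on n vertices, valid span) to the set of labeled trees on n+1 vertices. -/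

import Mathlib

/-!
Consecutive arcs of a chain that turns around share their upper (or lower) endpoint, so one covers
the other. A chain without covered arcs that starts at its minimum is therefore strictly increasing
(`IsValidChain.strictMono`), and every strictly increasing path is such a chain
(`isValidChain_of_strictMono`). A valid span of `τ` is thus the same thing as an increasing path
`w` in `τ`.

Write `τ = H ⊔ chainGraph w` with `H` edge-disjoint from the chain; then the image of `(τ, w)` is
`coneGraph H w`, in which the `k` chain edges have been replaced by `k + 1` edges from the new
vertex to the vertices of the chain. One side is connected iff the other is, and edges and vertices
both increase by one, so one side is a tree iff the other is (`isTree_sup_chainGraph_iff`).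

The image determines the chain, as the increasing enumeration of the neighbours of the new vertex,
and `H`, as its restriction to the old vertices; this gives injectivity (`pushGraph_injective`).
In any tree on `n + 1 ≥ 2` vertices the last vertex has a neighbour and no two of its neighbours
are adjacent, so the same recipe defines a preimage (`exists_pushGraph_eq`).
-/

/-- The lower endpoint of the `i`-th arc of the chain `w`. -/
def arcMin {n k : ℕ} (w : Fin (k + 1) → Fin n) (i : Fin k) : Fin n :=
  min (w i.castSucc) (w i.succ)

/-- The upper endpoint of the `i`-th arc of the chain `w`. -/
def arcMax {n k : ℕ} (w : Fin (k + 1) → Fin n) (i : Fin k) : Fin n :=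
  max (w i.castSucc) (w i.succ)

/-- `w` is a chain of (undirected) arcs of `τ` witnessing that `[u, v]` is a valid span:
it is a path in `τ` from `u` to `v`, all its vertices lie in `[u, v]`, its arcs cover
`[u, v]`, and no arc is covered by another. -/
def IsValidChain {n : ℕ} (τ : SimpleGraph (Fin n)) (u v : Fin n) {k : ℕ}
    (w : Fin (k + 1) → Fin n) : Prop :=
  Function.Injective w ∧ w 0 = u ∧ w (Fin.last k) = v ∧
  (∀ i : Fin k, τ.Adj (w i.castSucc) (w i.succ)) ∧
  (∀ i : Fin (k + 1), u ≤ w i ∧ w i ≤ v) ∧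
  (∀ x : Fin n, u ≤ x → x ≤ v → x = u ∨ x = v ∨
      ∃ i : Fin k, arcMin w i ≤ x ∧ x ≤ arcMax w i) ∧
  (∀ i j : Fin k, i ≠ j → ¬ (arcMin w j ≤ arcMin w i ∧ arcMax w i ≤ arcMax w j))

/-- `(u, v)` is a valid span of `τ`: either a single word (`u = v`, chain of length 0),
or a word sequence covered by a chain of non-nested arcs of `τ`. -/
def IsValidSpan {n : ℕ} (τ : SimpleGraph (Fin n)) (u v : Fin n) : Prop :=
  u ≤ v ∧ ∃ (k : ℕ) (w : Fin (k + 1) → Fin n), IsValidChain τ u v w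


/-- A valid span of `τ` together with its associated chain of arcs. -/
structure ValidSpanData (n : ℕ) (τ : SimpleGraph (Fin n)) where
  u : Fin n
  v : Fin n
  hle : u ≤ v
  k : ℕ
  w : Fin (k + 1) → Fin n
  hchain : IsValidChain τ u v w

/-- The graph on `{1, ..., n+1}` obtained from `τ` by deleting the edges of the chain
associated with the valid span `s` and connecting every vertex of that chain to the
new vertex `n+1`. -/
def pushGraph {n : ℕ} (τ : SimpleGraph (Fin n)) (s : ValidSpanData n τ) :
    SimpleGraph (Fin (n + 1)) :=
  SimpleGraph.fromRel fun a b =>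
    (∃ a' b' : Fin n, a = a'.castSucc ∧ b = b'.castSucc ∧ τ.Adj a' b' ∧
      ¬ ∃ i : Fin s.k, (s.w i.castSucc = a' ∧ s.w i.succ = b') ∨
        (s.w i.castSucc = b' ∧ s.w i.succ = a')) ∨
    (a = Fin.last n ∧ ∃ i : Fin (s.k + 1), b = (s.w i).castSucc)

/-! ### Chain edges and the cone over a chain -/

/-- The path graph traced by the sequence `w`: its edges join consecutive terms
(equal consecutive terms give no edge). -/
def chainGraph {n k : ℕ} (w : Fin (k + 1) → Fin n) : SimpleGraph (Fin n) :=
  SimpleGraph.fromRel fun a b => ∃ i : Fin k, w i.castSucc = a ∧ w i.succ = b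

/-- The graph `H`, transported to `Fin (n + 1)`, with the new vertex `Fin.last n` joined to every
term of `w`. -/
def coneGraph {n k : ℕ} (H : SimpleGraph (Fin n)) (w : Fin (k + 1) → Fin n) :
    SimpleGraph (Fin (n + 1)) :=
  H.map Fin.castSuccEmb ⊔
    SimpleGraph.fromRel fun x y => x = Fin.last n ∧ ∃ i, y = (w i).castSucc

section adjacency

variable {n k : ℕ} {w : Fin (k + 1) → Fin n} {H : SimpleGraph (Fin n)}

lemma chainGraph_adj (hw : StrictMono w) (a b : Fin n) :
    (chainGraph w).Adj a b ↔
      ∃ i : Fin k, (w i.castSucc = a ∧ w i.succ = b) ∨ (w i.castSucc = b ∧ w i.succ = a) := by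
  have hne : ∀ i : Fin k, w i.castSucc ≠ w i.succ := fun i => (hw i.castSucc_lt_succ).ne
  rw [chainGraph, SimpleGraph.fromRel_adj, ← exists_or]
  constructor
  · exact fun h => h.2
  · rintro ⟨i, ⟨rfl, rfl⟩ | ⟨rfl, rfl⟩⟩
    · exact ⟨hne i, i, .inl ⟨rfl, rfl⟩⟩
    · exact ⟨(hne i).symm, i, .inr ⟨rfl, rfl⟩⟩

@[simp] lemma coneGraph_adj_castSucc (a b : Fin n) :
    (coneGraph H w).Adj a.castSucc b.castSucc ↔ H.Adj a b := by
  have ha : a.castSucc ≠ Fin.last n := (Fin.castSucc_lt_last a).ne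
  have hb : b.castSucc ≠ Fin.last n := (Fin.castSucc_lt_last b).ne
  rw [coneGraph, SimpleGraph.sup_adj, SimpleGraph.fromRel_adj]
  simpa [ha, hb] using SimpleGraph.map_adj_apply (G := H) (f := Fin.castSuccEmb)

@[simp] lemma coneGraph_adj_last (b : Fin n) :
    (coneGraph H w).Adj (Fin.last n) b.castSucc ↔ b ∈ Set.range w := by
  have hl : ∀ a : Fin n, a.castSucc ≠ Fin.last n := fun a => (Fin.castSucc_lt_last a).ne
  rw [coneGraph, SimpleGraph.sup_adj, SimpleGraph.fromRel_adj, SimpleGraph.map_adj]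
  simp [hl, (hl _).symm, eq_comm]

/-- Graphs on `Fin (n + 1)` agree as soon as they agree away from the last vertex and on the
neighbours of the last vertex. -/
lemma graph_ext_last {G G' : SimpleGraph (Fin (n + 1))}
    (h₁ : ∀ a b : Fin n, G.Adj a.castSucc b.castSucc ↔ G'.Adj a.castSucc b.castSucc)
    (h₂ : ∀ b : Fin n, G.Adj (Fin.last n) b.castSucc ↔ G'.Adj (Fin.last n) b.castSucc) :
    G = G' := by
  ext x y
  cases x using Fin.lastCases with
  | last =>
    cases y using Fin.lastCases with
    | last => simp
    | cast b => exact h₂ b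
  | cast a =>
    cases y using Fin.lastCases with
    | last => rw [G.adj_comm, G'.adj_comm]; exact h₂ a
    | cast b => exact h₁ a b

end adjacency

/-! ### Valid chains are the increasing paths -/

section chains

/-- Two consecutive arcs of a chain that turns around share an endpoint on the same side, so one
of them covers the other; hence a chain without covered arcs that starts at its minimum climbs. -/
lemma IsValidChain.strictMono {n k : ℕ} {τ : SimpleGraph (Fin n)} {u v : Fin n}
    {w : Fin (k + 1) → Fin n} (h : IsValidChain τ u v w) : StrictMono w := by
  obtain ⟨hinj, h0, -, -, hmem, -, hnest⟩ := h
  rw [Fin.strictMono_iff_lt_succ]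
  rintro ⟨i, hi⟩
  induction i with
  | zero =>
    refine lt_of_le_of_ne ?_ (fun h => ?_)
    · have := (hmem (Fin.succ ⟨0, hi⟩)).1
      rw [← h0] at this
      exact this
    · exact (Fin.castSucc_lt_succ (i := ⟨0, hi⟩)).ne (hinj h)
  | succ i ih =>
    have ih := ih (by omega)
    by_contra hcon
    rw [not_lt] at hcon
    have e : (Fin.succ ⟨i, by omega⟩ : Fin (k + 1)) = Fin.castSucc ⟨i + 1, hi⟩ := rfl
    rw [e] at ih
    rcases le_total (w (Fin.castSucc ⟨i, by omega⟩)) (w (Fin.succ ⟨i + 1, hi⟩)) with hle | hle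
    · refine hnest ⟨i + 1, hi⟩ ⟨i, by omega⟩ (by simp) ?_
      simp only [arcMin, arcMax, e, min_eq_left ih.le, max_eq_right ih.le, min_eq_right hcon,
        max_eq_left hcon]
      exact ⟨hle, le_rfl⟩
    · refine hnest ⟨i, by omega⟩ ⟨i + 1, hi⟩ (by simp) ?_
      simp only [arcMin, arcMax, e, min_eq_left ih.le, max_eq_right ih.le, min_eq_right hcon,
        max_eq_left hcon]
      exact ⟨hle, le_rfl⟩

/-- Conversely, a climbing path is a valid chain between its endpoints. -/
lemma isValidChain_of_strictMono {n k : ℕ} {τ : SimpleGraph (Fin n)}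
    {w : Fin (k + 1) → Fin n} (hw : StrictMono w)
    (hadj : ∀ i : Fin k, τ.Adj (w i.castSucc) (w i.succ)) :
    IsValidChain τ (w 0) (w (Fin.last k)) w := by
  have hmin : ∀ i, arcMin w i = w i.castSucc := fun i =>
    min_eq_left (hw i.castSucc_lt_succ).le
  have hmax : ∀ i, arcMax w i = w i.succ := fun i =>
    max_eq_right (hw i.castSucc_lt_succ).le
  refine ⟨hw.injective, rfl, rfl, hadj,
    fun i => ⟨hw.monotone (Fin.zero_le i), hw.monotone (Fin.le_last i)⟩, ?_, ?_⟩
  · intro x hx hx'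
    simp only [hmin, hmax]
    by_contra! hcon
    obtain ⟨-, hv, hcov⟩ := hcon
    -- If no arc covers `x`, then every term of the chain lies at or below `x`.
    have : ∀ i, w i ≤ x := by
      intro i
      induction i using Fin.induction with
      | zero => exact hx
      | succ i ih => exact (hcov i ih).le
    exact hv (le_antisymm hx' (this _))
  · rintro i j hij ⟨h₁, h₂⟩
    rw [hmin, hmin, hw.le_iff_le, Fin.castSucc_le_castSucc_iff] at h₁
    rw [hmax, hmax, hw.le_iff_le, Fin.succ_le_succ_iff] at h₂
    exact hij (le_antisymm h₂ h₁)

lemma chainGraph_le {n : ℕ} {τ : SimpleGraph (Fin n)} (s : ValidSpanData n τ) :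
    chainGraph s.w ≤ τ := by
  intro a b h
  rw [chainGraph_adj s.hchain.strictMono] at h
  obtain ⟨i, ⟨rfl, rfl⟩ | ⟨rfl, rfl⟩⟩ := h
  · exact s.hchain.2.2.2.1 i
  · exact (s.hchain.2.2.2.1 i).symm

lemma pushGraph_eq_coneGraph {n : ℕ} (τ : SimpleGraph (Fin n)) (s : ValidSpanData n τ) :
    pushGraph τ s = coneGraph (τ \ chainGraph s.w) s.w := by
  apply graph_ext_last
  · intro a b
    have ha : a.castSucc ≠ Fin.last n := (Fin.castSucc_lt_last a).ne
    have hb : b.castSucc ≠ Fin.last n := (Fin.castSucc_lt_last b).ne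
    rw [coneGraph_adj_castSucc, SimpleGraph.sdiff_adj, chainGraph_adj s.hchain.strictMono,
      pushGraph, SimpleGraph.fromRel_adj]
    constructor
    · rintro ⟨-, (⟨a', b', h₁, h₂, h⟩ | h) | (⟨a', b', h₁, h₂, h, h'⟩ | h)⟩
      · rw [Fin.castSucc_inj] at h₁ h₂
        subst h₁ h₂
        exact h
      · exact absurd h.1 ha
      · rw [Fin.castSucc_inj] at h₁ h₂
        subst h₁ h₂
        exact ⟨h.symm, fun ⟨i, hi⟩ => h' ⟨i, hi.symm⟩⟩
      · exact absurd h.1 hb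
    · intro h
      exact ⟨fun e => h.1.ne (Fin.castSucc_injective n e), .inl (.inl ⟨a, b, rfl, rfl, h⟩)⟩
  · intro b
    have hl : ∀ a : Fin n, Fin.last n ≠ a.castSucc := fun a => (Fin.castSucc_lt_last a).ne'
    simp [pushGraph, hl, (hl _).symm, eq_comm]

end chains

/-! ### Trading chain edges for cone edges -/

section trees

lemma reachable_of_adj_reachable {V W : Type*} {G : SimpleGraph V} {G' : SimpleGraph W}
    (f : V → W) (hf : ∀ a b, G.Adj a b → G'.Reachable (f a) (f b)) {a b : V}
    (h : G.Reachable a b) : G'.Reachable (f a) (f b) := by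
  obtain ⟨p⟩ := h
  induction p with
  | nil => exact .refl _
  | cons hadj _ ih => exact (hf _ _ hadj).trans ih

variable {n k : ℕ} {w : Fin (k + 1) → Fin n} {H : SimpleGraph (Fin n)}

lemma connected_sup_chainGraph_iff (hw : StrictMono w) :
    (H ⊔ chainGraph w).Connected ↔ (coneGraph H w).Connected := by
  have hl : ∀ i, (coneGraph H w).Reachable (Fin.last n) (w i).castSucc := fun i =>
    SimpleGraph.Adj.reachable (by simp)
  constructor
  · intro h
    have hr : ∀ a b : Fin n, (coneGraph H w).Reachable a.castSucc b.castSucc := by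
      intro a b
      refine reachable_of_adj_reachable Fin.castSucc ?_ (h.preconnected a b)
      intro a b hab
      rw [SimpleGraph.sup_adj, chainGraph_adj hw] at hab
      obtain hab | ⟨i, ⟨rfl, rfl⟩ | ⟨rfl, rfl⟩⟩ := hab
      · exact SimpleGraph.Adj.reachable (by simpa)
      · exact (hl _).symm.trans (hl _)
      · exact (hl _).symm.trans (hl _)
    rw [SimpleGraph.connected_iff_exists_forall_reachable]
    refine ⟨Fin.last n, fun x => ?_⟩
    cases x using Fin.lastCases with
    | last => exact .refl _
    | cast a => exact (hl 0).trans (hr _ _)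
  · intro h
    have hc : ∀ i, (H ⊔ chainGraph w).Reachable (w 0) (w i) := by
      intro i
      induction i using Fin.induction with
      | zero => exact .refl _
      | succ i ih =>
        refine ih.trans (SimpleGraph.Adj.reachable ?_)
        rw [SimpleGraph.sup_adj, chainGraph_adj hw]
        exact .inr ⟨i, .inl ⟨rfl, rfl⟩⟩
    -- The new vertex is retracted onto the start of the chain.
    let f : Fin (n + 1) → Fin n := Fin.lastCases (w 0) id
    have hfl : f (Fin.last n) = w 0 := by simp [f]
    have hfc : ∀ a : Fin n, f a.castSucc = a := fun a => by simp [f]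
    have hf : ∀ x y, (coneGraph H w).Adj x y → (H ⊔ chainGraph w).Reachable (f x) (f y) := by
      intro x y hxy
      cases x using Fin.lastCases with
      | last =>
        cases y using Fin.lastCases with
        | last => exact .refl _
        | cast b =>
          rw [coneGraph_adj_last] at hxy
          obtain ⟨i, rfl⟩ := hxy
          rw [hfl, hfc]
          exact hc i
      | cast a =>
        cases y using Fin.lastCases with
        | last =>
          rw [SimpleGraph.adj_comm, coneGraph_adj_last] at hxy
          obtain ⟨i, rfl⟩ := hxy
          rw [hfl, hfc]
          exact (hc i).symm
        | cast b =>
          rw [coneGraph_adj_castSucc] at hxy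
          rw [hfc, hfc]
          exact SimpleGraph.Adj.reachable (.inl hxy)
    rw [SimpleGraph.connected_iff_exists_forall_reachable]
    refine ⟨w 0, fun a => ?_⟩
    have := reachable_of_adj_reachable f hf (h.preconnected (w 0).castSucc a.castSucc)
    rwa [hfc, hfc] at this

lemma ncard_range_fin {m : ℕ} {α : Type*} {f : Fin m → α} (hf : Function.Injective f) :
    (Set.range f).ncard = m := by
  rw [← Set.image_univ, Set.ncard_image_of_injective _ hf, Set.ncard_univ, Nat.card_fin]

lemma ncard_edgeSet_sup_chainGraph (hw : StrictMono w) (hH : Disjoint H (chainGraph w)) :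
    (H ⊔ chainGraph w).edgeSet.ncard = H.edgeSet.ncard + k := by
  have hr : (chainGraph w).edgeSet = Set.range fun i : Fin k => s(w i.castSucc, w i.succ) := by
    ext e
    induction e using Sym2.ind with
    | _ a b => simp [chainGraph_adj hw]
  have hinj : Function.Injective fun i : Fin k => s(w i.castSucc, w i.succ) := by
    intro i j hij
    rw [Sym2.eq_iff] at hij
    obtain ⟨h, -⟩ | ⟨h₁, h₂⟩ := hij
    · exact Fin.castSucc_injective k (hw.injective h)
    · have h₁ := hw.injective h₁
      have h₂ := hw.injective h₂
      simp only [Fin.ext_iff, Fin.val_castSucc, Fin.val_succ] at h₁ h₂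
      omega
  rw [SimpleGraph.edgeSet_sup,
    Set.ncard_union_eq (SimpleGraph.disjoint_edgeSet.2 hH) (Set.toFinite _) (Set.toFinite _), hr,
    ncard_range_fin hinj]

lemma ncard_edgeSet_coneGraph (hw : StrictMono w) :
    (coneGraph H w).edgeSet.ncard = H.edgeSet.ncard + (k + 1) := by
  have hl : ∀ a : Fin n, Fin.last n ≠ a.castSucc := fun a => (Fin.castSucc_lt_last a).ne'
  have hE : (coneGraph H w).edgeSet =
      Sym2.map Fin.castSucc '' H.edgeSet ∪
        Set.range fun i => s(Fin.last n, (w i).castSucc) := by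
    rw [coneGraph, SimpleGraph.edgeSet_sup, SimpleGraph.edgeSet_map]
    congr 1
    ext e
    induction e using Sym2.ind with
    | _ x y =>
      simp only [SimpleGraph.mem_edgeSet, SimpleGraph.fromRel_adj, Set.mem_range, Sym2.eq_iff]
      constructor
      · rintro ⟨-, ⟨rfl, i, rfl⟩ | ⟨rfl, i, rfl⟩⟩
        · exact ⟨i, .inl ⟨rfl, rfl⟩⟩
        · exact ⟨i, .inr ⟨rfl, rfl⟩⟩
      · rintro ⟨i, ⟨rfl, rfl⟩ | ⟨rfl, rfl⟩⟩
        · exact ⟨hl _, .inl ⟨rfl, i, rfl⟩⟩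
        · exact ⟨(hl _).symm, .inr ⟨rfl, i, rfl⟩⟩
  have hd : Disjoint (Sym2.map Fin.castSucc '' H.edgeSet)
      (Set.range fun i => s(Fin.last n, (w i).castSucc)) := by
    rw [Set.disjoint_left]
    rintro _ ⟨e, -, rfl⟩ ⟨i, hi⟩
    have : Fin.last n ∈ Sym2.map Fin.castSucc e := by
      rw [← hi]
      exact Sym2.mem_mk_left _ _
    obtain ⟨a, -, ha⟩ := Sym2.mem_map.1 this
    exact hl a ha.symm
  have hinj : Function.Injective fun i => s(Fin.last n, (w i).castSucc) := fun i j hij =>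
    hw.injective (Fin.castSucc_injective n (Sym2.congr_right.1 hij))
  rw [hE, Set.ncard_union_eq hd (Set.toFinite _) (Set.toFinite _), ncard_range_fin hinj,
    Set.ncard_image_of_injective _ (Sym2.map.injective (Fin.castSucc_injective n))]

/-- Trading the `k` chain edges for the `k + 1` edges at the new vertex preserves connectedness
and raises the numbers of edges and of vertices by one each, so it preserves being a tree. -/
lemma isTree_sup_chainGraph_iff (hw : StrictMono w) (hH : Disjoint H (chainGraph w)) :
    (H ⊔ chainGraph w).IsTree ↔ (coneGraph H w).IsTree := by
  rw [SimpleGraph.isTree_iff_connected_and_card, SimpleGraph.isTree_iff_connected_and_card,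
    connected_sup_chainGraph_iff hw, Nat.card_coe_set_eq, Nat.card_coe_set_eq,
    ncard_edgeSet_sup_chainGraph hw hH, ncard_edgeSet_coneGraph hw, Nat.card_fin, Nat.card_fin]
  refine and_congr_right fun _ => ?_
  omega

lemma not_adj_of_isAcyclic {V : Type*} {G : SimpleGraph V} (hG : G.IsAcyclic) {a b c : V}
    (hab : G.Adj a b) (hac : G.Adj a c) : ¬ G.Adj b c := by
  intro hbc
  refine hG (.cons hab (.cons hbc (.cons hac.symm .nil))) ?_
  simp [SimpleGraph.Walk.isCycle_def, hab.ne, hab.ne', hac.ne, hac.ne', hbc.ne]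

end trees

/-! ### Bijectivity -/

lemma isTree_pushGraph {n : ℕ} {τ : SimpleGraph (Fin n)} (hτ : τ.IsTree)
    (s : ValidSpanData n τ) : (pushGraph τ s).IsTree := by
  rw [pushGraph_eq_coneGraph,
    ← isTree_sup_chainGraph_iff s.hchain.strictMono disjoint_sdiff_self_left, sdiff_sup_cancel (chainGraph_le s)]
  exact hτ

/-- The chain is the increasing enumeration of the neighbours of the new vertex, and `τ` consists
of the chain edges and the edges that avoid the new vertex. -/
lemma pushGraph_injective {n : ℕ} {τ τ' : SimpleGraph (Fin n)} (s : ValidSpanData n τ)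
    (s' : ValidSpanData n τ') (h : pushGraph τ s = pushGraph τ' s') : τ = τ' ∧ HEq s s' := by
  rw [pushGraph_eq_coneGraph, pushGraph_eq_coneGraph] at h
  have hle := chainGraph_le s
  have hle' := chainGraph_le s'
  obtain ⟨u, v, huv, k, w, hc⟩ := s
  obtain ⟨u', v', huv', k', w', hc'⟩ := s'
  dsimp only at h hle hle'
  have hrange : Set.range w = Set.range w' := by
    ext b
    rw [← coneGraph_adj_last (H := τ \ chainGraph w), h, coneGraph_adj_last]
  have hk : k = k' := by
    have := congrArg Set.ncard hrange
    rw [ncard_range_fin hc.1, ncard_range_fin hc'.1] at this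
    omega
  subst hk
  obtain rfl : w = w' := (StrictMono.range_inj hc.strictMono hc'.strictMono).1 hrange
  have hH : τ \ chainGraph w = τ' \ chainGraph w := by
    ext a b
    rw [← coneGraph_adj_castSucc (w := w), h, coneGraph_adj_castSucc]
  obtain rfl : τ = τ' := by
    rw [← sdiff_sup_cancel hle, ← sdiff_sup_cancel hle', hH]
  obtain rfl : u = u' := hc.2.1.symm.trans hc'.2.1
  obtain rfl : v = v' := hc.2.2.1.symm.trans hc'.2.2.1
  exact ⟨rfl, .rfl⟩

/-- Joining the neighbours of the last vertex of a tree into an increasing path and deleting that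
vertex gives a preimage. No two of these neighbours are adjacent, as a tree has no triangle, so
the path edges are new. -/
lemma exists_pushGraph_eq {n : ℕ} (hn : 1 ≤ n) {G : SimpleGraph (Fin (n + 1))} (hG : G.IsTree) :
    ∃ (τ : SimpleGraph (Fin n)) (s : ValidSpanData n τ), τ.IsTree ∧ pushGraph τ s = G := by
  classical
  let S : Finset (Fin n) := Finset.univ.filter fun a => G.Adj (Fin.last n) a.castSucc
  have hS : S.Nonempty := by
    have : Nontrivial (Fin (n + 1)) := Fin.nontrivial_iff_two_le.2 (by omega)
    obtain ⟨x, hx⟩ := hG.connected.preconnected.exists_adj_of_nontrivial (Fin.last n)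
    cases x using Fin.lastCases with
    | last => exact absurd hx (G.irrefl)
    | cast a => exact ⟨a, by simpa [S] using hx⟩
  obtain ⟨k, hk⟩ : ∃ k, S.card = k + 1 := Nat.exists_eq_add_one.2 hS.card_pos
  let w : Fin (k + 1) → Fin n := S.orderEmbOfFin hk
  have hw : StrictMono w := (S.orderEmbOfFin hk).strictMono
  have hrange : ∀ b, b ∈ Set.range w ↔ G.Adj (Fin.last n) b.castSucc := by
    intro b
    rw [Finset.range_orderEmbOfFin]
    simp [S]
  let H : SimpleGraph (Fin n) := G.comap Fin.castSucc
  have hcone : coneGraph H w = G := by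
    apply graph_ext_last
    · intro a b
      rw [coneGraph_adj_castSucc, SimpleGraph.comap_adj]
    · intro b
      rw [coneGraph_adj_last, hrange]
  have hdisj : Disjoint H (chainGraph w) := by
    rw [← SimpleGraph.disjoint_edgeSet, Set.disjoint_left]
    intro e
    induction e using Sym2.ind with
    | _ a b =>
      rw [SimpleGraph.mem_edgeSet, SimpleGraph.mem_edgeSet, chainGraph_adj hw]
      have hnot : ∀ i j, ¬ H.Adj (w i) (w j) := fun i j =>
        not_adj_of_isAcyclic hG.isAcyclic ((hrange _).1 ⟨i, rfl⟩) ((hrange _).1 ⟨j, rfl⟩)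
      rintro h ⟨i, ⟨rfl, rfl⟩ | ⟨rfl, rfl⟩⟩
      · exact hnot _ _ h
      · exact hnot _ _ h
  have hchain : IsValidChain (H ⊔ chainGraph w) (w 0) (w (Fin.last k)) w :=
    isValidChain_of_strictMono hw fun i =>
      .inr ((chainGraph_adj hw _ _).2 ⟨i, .inl ⟨rfl, rfl⟩⟩)
  refine ⟨H ⊔ chainGraph w, ⟨_, _, hw.monotone (Fin.zero_le _), k, w, hchain⟩, ?_, ?_⟩
  · rw [isTree_sup_chainGraph_iff hw hdisj, hcone]
    exact hG
  · rw [pushGraph_eq_coneGraph]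
    dsimp only
    rw [sup_sdiff_right_self, hdisj.sdiff_eq_left, hcone]

/-- The map sending a pair (tree `τ` on `{1,...,n}`, valid span of `τ`) to the graph
obtained by deleting the edges of the associated chain and connecting its vertices to
the new vertex `n+1` always produces a tree on `{1, ..., n+1}`, and is a bijection
onto the set of labeled trees on `n+1` vertices. -/
theorem pushGraph_bijective (n : ℕ) (hn : 1 ≤ n) :
    ∃ F : (Σ τ : {G : SimpleGraph (Fin n) // G.IsTree}, ValidSpanData n τ.1) →
        {G' : SimpleGraph (Fin (n + 1)) // G'.IsTree},
      (∀ p, (F p).1 = pushGraph p.1.1 p.2) ∧ Function.Bijective F := by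
  refine ⟨fun p => ⟨pushGraph p.1.1 p.2, isTree_pushGraph p.1.2 p.2⟩, fun _ => rfl, ?_, ?_⟩
  · rintro ⟨⟨τ, hτ⟩, s⟩ ⟨⟨τ', hτ'⟩, s'⟩ h
    obtain ⟨rfl, h⟩ := pushGraph_injective s s' (congrArg Subtype.val h)
    rw [eq_of_heq h]
  · rintro ⟨G, hG⟩
    obtain ⟨τ, s, hτ, h⟩ := exists_pushGraph_eq hn hG
    exact ⟨⟨⟨τ, hτ⟩, s⟩, Subtype.ext h⟩
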